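/- Let p be an odd prime, l ≥ 1 and 1 ≤ k < p/2 integers, (λ₁, …, λ_l) ∈ (F_p*)^l, (i(1), …, i(l)) ∈ ℕ^l, and ε₁, ε₂ ∈ F_p*. Let α ∈ F(p) be the continued fraction of type (p, l, k) defined by a_j = λ_j A_{i(j),k} for 1 ≤ j ≤ l and α^p = ε₁ P_k α_{l+1} + ε₂ Q_k. Extend (i(n))_{n≥1} by i(f(n)) = i(n) + 1 for n ≥ 1 and i(n) = 0 for n > l with n ∉ f(ℕ*), where f(n) = (2k+1)n + l − 2k. Suppose that for 1 ≤ n ≤ l the finite continued fractions δ_n = [θ_k^{i(n)} λ_n, …, θ_k^{i(1)} λ₁, 2kθ_k/ε₂] are well defined in F_p* (condition III), and that δ_l = 2kε₁/ε₂ (condition IV). Then every partial quotient satisfies a_n = λ_n A_{i(n),k} with λ_n ∈ F_p* for n ≥ 1, where the sequence (λ_n) is determined by λ₁, …, λ_l together with, for n ≥ 1: λ_{f(n)} = ε₁^{(−1)^n} λ_n and λ_{f(n)+i} = −v_{i,k} ε₁^{(−1)^{n+i}} (2kθ_k δ_n)^{(−1)^i} for 1 ≤ i ≤ 2k, and the sequence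 (δ_n)_{n≥1} in F_p* is determined by δ₁, …, δ_l together with, for n ≥ 1: δ_{f(n)} = ε₁^{(−1)^n} δ_n θ_k and δ_{f(n)+i} = ε₁^{(−1)^{n+i}} (i v_{i,k}/(2k−2i+1)) (2kθ_k δ_n)^{(−1)^i} for 1 ≤ i ≤ 2k. -/

import Mathlib

/-!
Three identities carry the proof; write `θ = θ_k` and `v_i = v_{i,k}`.

* `A_{i,k}^p = P_k A_{i+1,k} - 2k θ^{i+1} Q_k` (`Aseq_step`, `Aseq_eval`). A `p`-th power has zero
  derivative, so the remainder of `A_{i,k}^p` modulo `P_k` has derivative divisible by `P_{k-1}` and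
  degree less than `2k`. With the antisymmetry of the values at `±1` this makes it a multiple
  of `Q_k`, and the values `A_{i,k}(±1) = ±θ^i` fix the factor.
* `P_k / Q_k = [v₁T, …, v_{2k}T]`. Let `a_1 = 1` and `a_i v_i = 2k - 2i + 1`. The numerators and
  denominators `X_i`, `Y_i` of the convergents satisfy a first-order differential system
  (`contX_ode`, `contY_ode`) with coefficients `a_i`, and `a_{2k+1} = 0`. In degree less than `p`
  the system can be solved: the last convergent has numerator `(-1)^k P_k` and denominator
  `(-1)^k Q_k`, and the numerator before it is `-(-1)^k a_{2k} Q_k`, with `a_{2k} = (2kθ)²`.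
* If `β_m = B + r₀ (Q_k - w) / P_k` with `w` of degree at most `-p`, then the second identity gives
  `a_m = B` and `a_{m+i} = r₀^{±1} v_i T` for `1 ≤ i ≤ 2k`, and expresses `w⁻¹` as a combination of
  `Q_k` and `P_k β_{m+2k+1}` (`cf_block`).

Put `δ_0 = 2kθ/ε₂`. The theorem follows by induction on `n` from the relation
`β_n^p = ε₁^{(-1)^{n+1}} P_k β_{f(n)} + (2kθ/δ_{n-1}) Q_k`, carried along with
`δ_j = θ^{i(j)} λ_j + 1/δ_{j-1}` for `j < f(n)`. For `n = 1` these are the defining relation of `α`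
and condition (III). Substituting `β_n = λ_n A_{i(n),k} + 1/β_{n+1}` into the relation
(`beta_expand`) puts `β_{f(n)}` in the form required by `cf_block`, with
`w⁻¹ = 2kθ δ_n β_{n+1}^p`. This yields the partial quotients with indices from `f(n)` to
`f(n) + 2k`, and the formula for `w⁻¹` is the relation for `n + 1`. Condition (IV) is what makes the
recursion for `δ` continue across the start of a block.
-/

noncomputable section
open Polynomial

def Tval (F : Type) [Field F] : LaurentSeries F :=
  (HahnSeries.single (1 : ℤ) (1 : F) : LaurentSeries F)⁻¹

def adeg {F : Type} [Field F] (α : LaurentSeries F) : ℤ := -α.order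

def pEval {F : Type} [Field F] (f : Polynomial F) : LaurentSeries F :=
  f.eval₂ HahnSeries.C (Tval F)

def pEvalHom (F : Type) [Field F] : Polynomial F →+* LaurentSeries F :=
  Polynomial.eval₂RingHom HahnSeries.C (Tval F)

/-- substitution `T ↦ v T` on Laurent series in `1/T`
(the underlying Hahn-series variable is `1/T`). -/
def scaleT {F : Type} [Field F] (v : F) (α : LaurentSeries F) : LaurentSeries F where
  coeff n := v ^ (-n) * α.coeff n
  isPWO_support' := α.isPWO_support'.mono (fun n hn => by
    simp only [Function.mem_support, ne_eq] at hn ⊢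
    intro h; exact hn (by rw [h, mul_zero]))

/-- coefficient-wise map of Laurent series along a ring homomorphism. -/
def lsMap {F L : Type} [Field F] [Field L] (f : F →+* L) (α : LaurentSeries F) :
    LaurentSeries L where
  coeff n := f (α.coeff n)
  isPWO_support' := α.isPWO_support'.mono (fun n hn => by
    simp only [Function.mem_support, ne_eq] at hn ⊢
    intro h; exact hn (by rw [h, map_zero]))

/-- integral (polynomial) part of a Laurent series in `1/T`. -/
def intPart {F : Type} [Field F] (α : LaurentSeries F) : Polynomial F :=
  ∑ j ∈ Finset.range ((-α.order).toNat + 1),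
    Polynomial.C (α.coeff (-(j : ℤ))) * Polynomial.X ^ j

def IsCFOf {F : Type} [Field F] (α : LaurentSeries F) (a : ℕ → Polynomial F)
    (β : ℕ → LaurentSeries F) : Prop :=
  β 1 = α ∧ ∀ n, 1 ≤ n →
    0 < (a n).degree ∧ 0 < adeg (β n) ∧ β n = pEval (a n) + (β (n + 1))⁻¹

def fcf {F : Type} [DivisionRing F] : List F → F
  | [] => 0
  | [c] => c
  | c :: d :: t => c + (fcf (d :: t))⁻¹

def fcfWD {F : Type} [DivisionRing F] : List F → Prop
  | [] => True
  | [_] => True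
  | _ :: d :: t => fcf (d :: t) ≠ 0 ∧ fcfWD (d :: t)

def polyInt {F : Type} [Field F] (f : Polynomial F) : Polynomial F :=
  ∑ i ∈ Finset.range (f.natDegree + 1),
    Polynomial.C (f.coeff i * ((i : F) + 1)⁻¹) * Polynomial.X ^ (i + 1)

def Pka {F : Type} [Field F] (k : ℕ) (a : F) : Polynomial F :=
  (Polynomial.X ^ 2 + Polynomial.C a) ^ k

def Qka {F : Type} [Field F] (k : ℕ) (a : F) : Polynomial F := polyInt (Pka (k - 1) a)

def Pk {F : Type} [Field F] (k : ℕ) : Polynomial F := (Polynomial.X ^ 2 - 1) ^ k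

def Qk {F : Type} [Field F] (k : ℕ) : Polynomial F := polyInt (Pk (k - 1))

def Aseq (F : Type) [Field F] (p k : ℕ) : ℕ → Polynomial F
  | 0 => Polynomial.X
  | i + 1 => Aseq F p k i ^ p / Pk k

def vseq (F : Type) [Field F] (k : ℕ) : ℕ → F
  | 0 => 1
  | 1 => 2 * k - 1
  | i + 1 =>
      (((2 * (k : ℤ) - 2 * i - 1) * (2 * (k : ℤ) - 2 * i + 1) : ℤ) : F) *
        (((i : F) * (2 * k - i))⁻¹) * (vseq F k i)⁻¹

def theta (F : Type) [Field F] (k : ℕ) : F :=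
  (-1) ^ k * ∏ j ∈ Finset.Icc 1 k, (1 - (2 * (j : F))⁻¹)

def continuant {R : Type} [CommRing R] (a : ℕ → R) (c0 c1 : R) : ℕ → R
  | 0 => c0
  | 1 => c1
  | n + 2 => a (n + 2) * continuant a c0 c1 (n + 1) + continuant a c0 c1 n

def largestPow (m N : ℕ) : ℕ := sSup {j : ℕ | m ^ j ∣ N}

def nu0 {F : Type} [Field F] (a : ℕ → Polynomial F) : ℝ :=
  Filter.limsup
    (fun n => ((a (n + 1)).natDegree : ℝ) / ∑ j ∈ Finset.Icc 1 n, ((a j).natDegree : ℝ))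
    Filter.atTop


/-! ### Polynomials of degree less than `p` -/

variable {p : ℕ} [Fact p.Prime]

lemma natCast_ne_zero_of_lt {n : ℕ} (h0 : 0 < n) (hn : n < p) : (n : ZMod p) ≠ 0 := by
  rw [Ne, ZMod.natCast_eq_zero_iff]
  exact fun h => absurd (Nat.le_of_dvd h0 h) (by omega)

lemma odd_ne_zero {k i : ℕ} (hk2 : 2 * k < p) (hi : 1 ≤ i) (hik : i ≤ 2 * k) :
    (2 * (k : ZMod p) - 2 * i + 1) ≠ 0 := by
  have h : (2 * (k : ZMod p) - 2 * i + 1) = ((2 * (k : ℤ) - 2 * i + 1 : ℤ) : ZMod p) := by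
    push_cast; ring
  rw [h, Ne, ZMod.intCast_zmod_eq_zero_iff_dvd]
  intro hd
  have := Int.eq_zero_of_abs_lt_dvd hd (by rw [abs_lt]; constructor <;> omega)
  omega

/-- A polynomial of degree less than `p` is determined by its derivative and its value at `0`. -/
lemma eq_of_derivative_eq {f g : (ZMod p)[X]} (hf : f.natDegree < p) (hg : g.natDegree < p)
    (h : derivative f = derivative g) (h0 : f.eval 0 = g.eval 0) : f = g := by
  ext n
  rcases n with _ | n
  · simpa [coeff_zero_eq_eval_zero] using h0
  by_cases hn : n + 1 < p
  · have h1 := congrArg (fun q => q.coeff n) h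
    simp only [coeff_derivative] at h1
    have : ((n : ZMod p) + 1) ≠ 0 := by
      exact_mod_cast natCast_ne_zero_of_lt (Nat.succ_pos n) hn
    exact mul_right_cancel₀ this h1
  · rw [coeff_eq_zero_of_natDegree_lt (by omega), coeff_eq_zero_of_natDegree_lt (by omega)]

/-- Uniqueness for the differential equation `(T² - 1) f' = 2k T f` in degree less than `p`. -/
lemma eq_zero_of_ode {k : ℕ} {f : (ZMod p)[X]} (hf : f.natDegree < p)
    (h : (X ^ 2 - 1) * derivative f = C (2 * k : ZMod p) * (X * f)) (h0 : f.eval 0 = 0) :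
    f = 0 := by
  have key : ∀ n, f.coeff n = 0 := by
    intro n
    induction n using Nat.strong_induction_on with
    | _ n ih =>
      rcases n with _ | n
      · simpa [coeff_zero_eq_eval_zero] using h0
      by_cases hn : n + 1 < p
      · have h1 := congrArg (fun q => q.coeff n) h
        have hne : ((n : ZMod p) + 1) ≠ 0 := by
          exact_mod_cast natCast_ne_zero_of_lt (Nat.succ_pos n) hn
        simp only [sub_mul, coeff_sub, one_mul, coeff_C_mul] at h1
        have hX : (X * f).coeff n = 0 := by
          rcases n with _ | m
          · simp
          · rw [coeff_X_mul]; exact ih m (by omega)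
        have hD : (X ^ 2 * derivative f).coeff n = 0 := by
          rcases n with _ | _ | m
          · simp
          · rw [coeff_X_pow_mul']; simp
          · rw [coeff_X_pow_mul, coeff_derivative, ih (m + 1) (by omega), zero_mul]
        rw [hX, hD, coeff_derivative, mul_zero, zero_sub, neg_eq_zero] at h1
        exact (mul_eq_zero.mp h1).resolve_right hne
      · exact coeff_eq_zero_of_natDegree_lt (by omega)
  ext n; simpa using key n

/-! ### The polynomials `P_k` and `Q_k` -/

lemma polyInt_coeff_succ (f : (ZMod p)[X]) (n : ℕ) :
    (polyInt f).coeff (n + 1) = f.coeff n * ((n : ZMod p) + 1)⁻¹ := by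
  unfold polyInt
  simp only [finsetSum_coeff, coeff_C_mul, coeff_X_pow]
  simp only [Nat.add_right_cancel_iff, mul_ite, mul_one, mul_zero, Finset.sum_ite_eq,
    Finset.mem_range]
  split_ifs with h
  · rfl
  · rw [coeff_eq_zero_of_natDegree_lt (by omega), zero_mul]

lemma polyInt_eval_zero (f : (ZMod p)[X]) : (polyInt f).eval 0 = 0 := by
  unfold polyInt
  simp [eval_finsetSum]

lemma polyInt_natDegree_le (f : (ZMod p)[X]) : (polyInt f).natDegree ≤ f.natDegree + 1 := by
  unfold polyInt
  refine natDegree_sum_le_of_forall_le _ _ fun i hi => ?_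
  rw [Finset.mem_range] at hi
  exact (natDegree_C_mul_X_pow_le _ _).trans (by omega)

lemma derivative_polyInt {f : (ZMod p)[X]} (hf : f.natDegree + 1 < p) :
    derivative (polyInt f) = f := by
  ext n
  rw [coeff_derivative, polyInt_coeff_succ]
  by_cases hn : n + 1 < p
  · have hne : ((n : ZMod p) + 1) ≠ 0 := by
      exact_mod_cast natCast_ne_zero_of_lt (Nat.succ_pos n) hn
    field_simp
  · rw [coeff_eq_zero_of_natDegree_lt (by omega)]; simp

lemma natDegree_sq_sub_one : ((X : (ZMod p)[X]) ^ 2 - 1).natDegree = 2 := by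
  have := natDegree_X_pow_sub_C (R := ZMod p) (n := 2) (r := 1)
  simpa using this

lemma monic_sq_sub_one : ((X : (ZMod p)[X]) ^ 2 - 1).Monic := by
  have := monic_X_pow_sub_C (R := ZMod p) 1 (n := 2) (by norm_num)
  simpa using this

lemma Pk_monic (k : ℕ) : (Pk k : (ZMod p)[X]).Monic := monic_sq_sub_one.pow k

lemma Pk_natDegree (k : ℕ) : (Pk k : (ZMod p)[X]).natDegree = 2 * k := by
  rw [Pk, monic_sq_sub_one.natDegree_pow, natDegree_sq_sub_one, mul_comm]

lemma Pk_pred {k : ℕ} (hk : 1 ≤ k) : (Pk k : (ZMod p)[X]) = (X ^ 2 - 1) * Pk (k - 1) := by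
  obtain ⟨m, rfl⟩ : ∃ m, k = m + 1 := ⟨k - 1, by omega⟩
  simp [Pk, pow_succ, mul_comm]

lemma derivative_Pk (k : ℕ) :
    derivative (Pk k : (ZMod p)[X]) = C (2 * k : ZMod p) * X * Pk (k - 1) := by
  simp only [Pk, derivative_pow, derivative_sub, derivative_X, derivative_one]
  simp
  ring

lemma Qk_natDegree_le {k : ℕ} (hk : 1 ≤ k) : (Qk k : (ZMod p)[X]).natDegree ≤ 2 * k - 1 := by
  refine (polyInt_natDegree_le _).trans ?_
  rw [Pk_natDegree]; omega

lemma derivative_Qk {k : ℕ} (hk : 1 ≤ k) (hk2 : 2 * k < p) :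
    derivative (Qk k : (ZMod p)[X]) = Pk (k - 1) :=
  derivative_polyInt (by rw [Pk_natDegree]; omega)

lemma Qk_eval_zero (k : ℕ) : (Qk k : (ZMod p)[X]).eval 0 = 0 := polyInt_eval_zero _

/-- Integration by parts: `T P_k = (2k+1) Q_{k+1} + 2k Q_k`. -/
lemma Qk_rec {k : ℕ} (hk : 1 ≤ k) (hk2 : 2 * (k + 1) < p) :
    (X * Pk k : (ZMod p)[X]) = C (2 * k + 1 : ZMod p) * Qk (k + 1) + C (2 * k : ZMod p) * Qk k := by
  have hd := Qk_natDegree_le (p := p) (k := k + 1) (by omega)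
  have hd' := Qk_natDegree_le (p := p) hk
  apply eq_of_derivative_eq
  · refine lt_of_le_of_lt natDegree_mul_le ?_
    rw [Pk_natDegree, natDegree_X]; omega
  · refine lt_of_le_of_lt (natDegree_add_le _ _) ?_
    rw [max_lt_iff]
    exact ⟨(natDegree_C_mul_le _ _).trans_lt (by omega),
      (natDegree_C_mul_le _ _).trans_lt (by omega)⟩
  · rw [derivative_mul, derivative_add, derivative_C_mul, derivative_C_mul,
      derivative_Qk (by omega) hk2, derivative_Qk hk (by omega), derivative_Pk, derivative_X,
      Nat.add_sub_cancel, Pk_pred hk, C_add, C_1]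
    ring
  · simp [Qk_eval_zero]

lemma theta_succ (k : ℕ) :
    theta (ZMod p) (k + 1) = -theta (ZMod p) k * (1 - (2 * ((k : ZMod p) + 1))⁻¹) := by
  unfold theta
  rw [Finset.prod_Icc_succ_top (by omega)]
  push_cast
  ring

lemma two_ne {k : ℕ} (hk : 1 ≤ k) (hk2 : 2 * k < p) : (2 : ZMod p) ≠ 0 := by
  exact_mod_cast natCast_ne_zero_of_lt (p := p) (n := 2) (by omega) (by omega)

/-- `Q_k(1) = -1 / (2 k θ_k)` and `Q_k(-1) = 1 / (2 k θ_k)`. -/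
lemma Qk_eval {k : ℕ} (hk : 1 ≤ k) (hk2 : 2 * k < p) :
    2 * k * theta (ZMod p) k * (Qk k : (ZMod p)[X]).eval 1 = -1 ∧
    2 * k * theta (ZMod p) k * (Qk k : (ZMod p)[X]).eval (-1) = 1 := by
  have h2 := two_ne hk hk2
  induction k, hk using Nat.le_induction with
  | base =>
    have hQ : (Qk 1 : (ZMod p)[X]) = X := by
      apply eq_of_derivative_eq
      · exact (Qk_natDegree_le le_rfl).trans_lt (by omega)
      · rw [natDegree_X]; omega
      · rw [derivative_Qk le_rfl hk2]; simp [Pk]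
      · simp [Qk_eval_zero]
    have ht : theta (ZMod p) 1 = -(1 - 2⁻¹) := by simp [theta]
    rw [hQ, ht]
    constructor <;> simp <;> field_simp <;> ring
  | succ k hk ih =>
    obtain ⟨h1, h1'⟩ := ih (by omega)
    have hr := Qk_rec hk hk2
    have e1 := congrArg (eval 1) hr
    have e2 := congrArg (eval (-1)) hr
    have hP1 : (Pk k : (ZMod p)[X]).eval 1 = 0 := by
      simp [Pk]; omega
    have hP2 : (Pk k : (ZMod p)[X]).eval (-1) = 0 := by
      simp [Pk]; omega
    simp only [eval_mul, eval_add, eval_C, eval_X, hP1, hP2, mul_zero] at e1 e2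
    have hk1 : ((k : ZMod p) + 1) ≠ 0 := by
      exact_mod_cast natCast_ne_zero_of_lt (p := p) (n := k + 1) (by omega) (by omega)
    rw [theta_succ]
    have ht : 2 * (((k + 1 : ℕ) : ZMod p)) * (-theta (ZMod p) k * (1 - (2 * ((k : ZMod p) + 1))⁻¹))
        = -theta (ZMod p) k * (2 * k + 1) := by
      push_cast; field_simp; ring
    rw [ht]
    constructor
    · linear_combination h1 + theta (ZMod p) k * e1
    · linear_combination h1' + theta (ZMod p) k * e2

lemma theta_ne_zero {k : ℕ} (hk : 1 ≤ k) (hk2 : 2 * k < p) : theta (ZMod p) k ≠ 0 := by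
  intro h
  have := (Qk_eval hk hk2).2
  rw [h] at this
  simp at this

/-! ### The polynomials `A_{i,k}` -/

/-- Division of `A^p` by `P_k` when `A` takes opposite values `±t` at `±1`: the remainder is
`-2kθ_k t Q_k`, and the quotient takes the values `±θ_k t` at `±1`. Since `A^p` has zero derivative,
the derivative of the remainder is a multiple of `P_{k-1}`. -/
lemma Aseq_step {k : ℕ} (hk : 1 ≤ k) (hk2 : 2 * k < p) (A : (ZMod p)[X]) (t : ZMod p)
    (h1 : A.eval 1 = t) (h2 : A.eval (-1) = -t) :
    A ^ p = Pk k * (A ^ p / Pk k) - C (2 * k * theta (ZMod p) k * t) * Qk k ∧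
    (A ^ p / Pk k).eval 1 = theta (ZMod p) k * t ∧
    (A ^ p / Pk k).eval (-1) = -(theta (ZMod p) k * t) := by
  set B := A ^ p / Pk k with hB
  set r := A ^ p % Pk k with hr
  have hdiv : Pk k * B + r = A ^ p := EuclideanDomain.div_add_mod _ _
  have hrdeg : r.natDegree < 2 * k := by
    have := natDegree_mod_lt (A ^ p) (q := (Pk k : (ZMod p)[X])) (by rw [Pk_natDegree]; omega)
    rwa [Pk_natDegree] at this
  have hder : derivative (A ^ p) = 0 := by
    rw [derivative_pow]; simp
  have hd : Pk (k - 1) * ((X ^ 2 - 1) * derivative B + C (2 * k : ZMod p) * X * B)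
      + derivative r = 0 := by
    rw [← hder, ← hdiv, derivative_add, derivative_mul, derivative_Pk]
    rw [Pk_pred hk]; ring
  obtain ⟨g, hg⟩ : (Pk (k - 1) : (ZMod p)[X]) ∣ derivative r :=
    ⟨-((X ^ 2 - 1) * derivative B + C (2 * k : ZMod p) * X * B), by linear_combination hd⟩
  have hPm : (Pk (k - 1) : (ZMod p)[X]).Monic := Pk_monic _
  have hgdeg : g.natDegree = 0 := by
    by_cases hg0 : g = 0
    · simp [hg0]
    have h3 : (derivative r).natDegree = 2 * (k - 1) + g.natDegree := by
      rw [hg, hPm.natDegree_mul' hg0, Pk_natDegree]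
    have h4 := natDegree_derivative_le r
    omega
  obtain ⟨c, hc⟩ : ∃ c, g = C c := ⟨_, eq_C_of_natDegree_eq_zero hgdeg⟩
  have hQd := Qk_natDegree_le (p := p) hk
  obtain ⟨d, hd'⟩ : ∃ d, r = C c * Qk k + C d := by
    refine ⟨r.eval 0, eq_of_derivative_eq (by omega) ?_ ?_ ?_⟩
    · rw [natDegree_add_C]; exact (natDegree_C_mul_le _ _).trans_lt (by omega)
    · rw [hg, hc, derivative_add, derivative_C, derivative_C_mul, derivative_Qk hk hk2]; ring
    · simp [Qk_eval_zero]
  have h2' := two_ne hk hk2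
  have hk0 : (k : ZMod p) ≠ 0 := natCast_ne_zero_of_lt (by omega) (by omega)
  have hP1 : (Pk k : (ZMod p)[X]).eval 1 = 0 := by
    simp [Pk]; omega
  have hP2 : (Pk k : (ZMod p)[X]).eval (-1) = 0 := by
    simp [Pk]; omega
  obtain ⟨q1, q2⟩ := Qk_eval hk hk2
  have e1 := congrArg (eval 1) hdiv
  have e2 := congrArg (eval (-1)) hdiv
  rw [hd'] at e1 e2
  simp only [eval_add, eval_mul, eval_pow, eval_C, hP1, hP2, h1, h2, ZMod.pow_card, zero_mul,
    zero_add] at e1 e2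
  have hth := theta_ne_zero hk hk2
  have hne : 2 * k * theta (ZMod p) k ≠ 0 := mul_ne_zero (mul_ne_zero h2' hk0) hth
  have hd0 : d = 0 := by
    have : 2 * (2 * k * theta (ZMod p) k) * d = 0 := by
      linear_combination (2 * k * theta (ZMod p) k) * (e1 + e2) - c * (q1 + q2)
    exact (mul_eq_zero.mp this).resolve_left (mul_ne_zero h2' hne)
  have hcv : c = -(2 * k * theta (ZMod p) k * t) := by
    rw [hd0] at e1
    linear_combination (-2 * k * theta (ZMod p) k) * e1 + c * q1
  have hode : (X ^ 2 - 1) * derivative B + C (2 * k : ZMod p) * X * B + C c = 0 := by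
    have : Pk (k - 1) * ((X ^ 2 - 1) * derivative B + C (2 * k : ZMod p) * X * B + C c) = 0 := by
      rw [← hc]; linear_combination hd - hg
    exact (mul_eq_zero.mp this).resolve_left hPm.ne_zero
  refine ⟨?_, ?_, ?_⟩
  · rw [← hdiv, hd', hd0, hcv, C_neg, C_0]; ring
  · have := congrArg (eval 1) hode
    simp [hcv] at this
    have h3 : 2 * (k : ZMod p) * (eval 1 B - theta (ZMod p) k * t) = 0 := by
      linear_combination this
    exact sub_eq_zero.mp ((mul_eq_zero.mp h3).resolve_left (mul_ne_zero h2' hk0))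
  · have := congrArg (eval (-1)) hode
    simp [hcv] at this
    have h3 : 2 * (k : ZMod p) * (eval (-1) B + theta (ZMod p) k * t) = 0 := by
      linear_combination -this
    exact eq_neg_of_add_eq_zero_left ((mul_eq_zero.mp h3).resolve_left (mul_ne_zero h2' hk0))

lemma Aseq_eval {k : ℕ} (hk : 1 ≤ k) (hk2 : 2 * k < p) (i : ℕ) :
    (Aseq (ZMod p) p k i).eval 1 = theta (ZMod p) k ^ i ∧
    (Aseq (ZMod p) p k i).eval (-1) = -theta (ZMod p) k ^ i := by
  induction i with
  | zero => simp [Aseq]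
  | succ i ih =>
    have := (Aseq_step hk hk2 _ _ ih.1 ih.2).2
    rw [pow_succ', Aseq]
    exact this

lemma Aseq_pow {k : ℕ} (hk : 1 ≤ k) (hk2 : 2 * k < p) (i : ℕ) :
    Aseq (ZMod p) p k i ^ p = Pk k * Aseq (ZMod p) p k (i + 1)
      - C (2 * k * theta (ZMod p) k * theta (ZMod p) k ^ i) * Qk k :=
  (Aseq_step hk hk2 _ _ (Aseq_eval hk hk2 i).1 (Aseq_eval hk hk2 i).2).1

/-! ### The continued fraction of `P_k / Q_k` -/

/-- The auxiliary sequence `a_i` with `a_i v_i = 2k - 2i + 1`; it collects the coefficients of the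
differential system satisfied by the continuants of `[v₁T, …, v_{2k}T]`. -/
def coefA (p k : ℕ) [Fact p.Prime] : ℕ → ZMod p
  | 0 => 0
  | 1 => 1
  | i + 2 => coefA p k i + vseq (ZMod p) k (i + 1)

/-- Numerators of the convergents of `[v₁T, v₂T, …]`, with index shifted by one
(so `contX 0 = 0`, `contX 1 = 1`). -/
def contX (p k : ℕ) [Fact p.Prime] : ℕ → (ZMod p)[X]
  | 0 => 0
  | 1 => 1
  | i + 2 => C (vseq (ZMod p) k (i + 1)) * X * contX p k (i + 1) + contX p k i

/-- Denominators of the convergents of `[v₁T, v₂T, …]`, with index shifted by one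
(so `contY 0 = 1`, `contY 1 = 0`). -/
def contY (p k : ℕ) [Fact p.Prime] : ℕ → (ZMod p)[X]
  | 0 => 1
  | 1 => 0
  | i + 2 => C (vseq (ZMod p) k (i + 1)) * X * contY p k (i + 1) + contY p k i

lemma vseq_succ (k i : ℕ) :
    vseq (ZMod p) k (i + 2) = ((2 * (k : ZMod p) - 2 * (i + 1) - 1) * (2 * k - 2 * (i + 1) + 1)) *
      ((((i : ZMod p) + 1) * (2 * k - (i + 1)))⁻¹) * (vseq (ZMod p) k (i + 1))⁻¹ := by
  rw [vseq]
  · push_cast; ring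
  · simp

lemma coefA_spec {k : ℕ} (hk2 : 2 * k < p) (i : ℕ) (hi : i + 1 ≤ 2 * k) :
    coefA p k (i + 1) * vseq (ZMod p) k (i + 1) = 2 * k - 2 * i - 1 ∧
    coefA p k (i + 2) * coefA p k (i + 1) = (i + 1) * (2 * k - (i + 1)) := by
  induction i with
  | zero => simp [coefA, vseq]
  | succ i ih =>
    obtain ⟨h1, h2⟩ := ih (by omega)
    have hodd := odd_ne_zero (p := p) (i := i + 1) hk2 (by omega) (by omega)
    have hodd' : (2 * (k : ZMod p) - 2 * i - 1) ≠ 0 := by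
      push_cast at hodd; convert hodd using 1; ring
    have hv : vseq (ZMod p) k (i + 1) ≠ 0 := right_ne_zero_of_mul (h1 ▸ hodd')
    have ha : coefA p k (i + 1) ≠ 0 := left_ne_zero_of_mul (h1 ▸ hodd')
    have hi1 : ((i : ZMod p) + 1) ≠ 0 := by
      exact_mod_cast natCast_ne_zero_of_lt (p := p) (n := i + 1) (by omega) (by omega)
    have hi2 : (2 * (k : ZMod p) - (i + 1)) ≠ 0 := by
      have := natCast_ne_zero_of_lt (p := p) (n := 2 * k - (i + 1)) (by omega) (by omega)
      rw [Nat.cast_sub (by omega)] at this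
      exact_mod_cast this
    have h3 : coefA p k (i + 2) * vseq (ZMod p) k (i + 2) = 2 * k - 2 * (i + 1) - 1 := by
      have e : vseq (ZMod p) k (i + 2) * (((i : ZMod p) + 1) * (2 * k - (i + 1)) *
          vseq (ZMod p) k (i + 1)) =
            (2 * (k : ZMod p) - 2 * (i + 1) - 1) * (2 * k - 2 * (i + 1) + 1) := by
        rw [vseq_succ]; field_simp
      apply mul_right_cancel₀ hodd'
      rw [← h2] at e
      have e' : (coefA p k (i + 2) * vseq (ZMod p) k (i + 2)) *
          (coefA p k (i + 1) * vseq (ZMod p) k (i + 1)) =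
            (2 * (k : ZMod p) - 2 * (i + 1) - 1) * (2 * k - 2 * (i + 1) + 1) := by
        linear_combination e
      rw [h1] at e'
      linear_combination e'
    refine ⟨by push_cast; exact h3, ?_⟩
    have e4 : coefA p k (i + 1 + 2) = coefA p k (i + 1) + vseq (ZMod p) k (i + 2) := rfl
    rw [e4]
    push_cast
    show _ * coefA p k (i + 2) = _
    linear_combination h2 + h3

lemma coefA_mul_vseq {k : ℕ} (hk2 : 2 * k < p) {i : ℕ} (h1 : 1 ≤ i) (hi : i ≤ 2 * k) :
    coefA p k i * vseq (ZMod p) k i = 2 * k - 2 * i + 1 := by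
  obtain ⟨j, rfl⟩ : ∃ j, i = j + 1 := ⟨i - 1, by omega⟩
  rw [(coefA_spec hk2 j hi).1]; push_cast; ring

lemma coefA_mul_succ {k : ℕ} (hk2 : 2 * k < p) {i : ℕ} (hi : i ≤ 2 * k) :
    coefA p k (i + 1) * coefA p k i = i * (2 * k - i) := by
  rcases i with _ | i
  · simp [coefA]
  · rw [(coefA_spec hk2 i hi).2]; push_cast; ring

lemma vseq_ne_zero {k : ℕ} (hk2 : 2 * k < p) {i : ℕ} (h1 : 1 ≤ i) (hi : i ≤ 2 * k) :
    vseq (ZMod p) k i ≠ 0 :=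
  right_ne_zero_of_mul ((coefA_mul_vseq hk2 h1 hi) ▸ odd_ne_zero hk2 h1 hi)

lemma coefA_ne_zero {k : ℕ} (hk2 : 2 * k < p) {i : ℕ} (h1 : 1 ≤ i) (hi : i ≤ 2 * k) :
    coefA p k i ≠ 0 :=
  left_ne_zero_of_mul ((coefA_mul_vseq hk2 h1 hi) ▸ odd_ne_zero hk2 h1 hi)

lemma coefA_last {k : ℕ} (hk : 1 ≤ k) (hk2 : 2 * k < p) : coefA p k (2 * k + 1) = 0 := by
  have h := coefA_mul_succ hk2 (i := 2 * k) le_rfl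
  push_cast at h
  rw [sub_self, mul_zero] at h
  exact (mul_eq_zero.mp h).resolve_right (coefA_ne_zero hk2 (by omega) le_rfl)

/-- The numerators of the convergents satisfy a first-order differential system; the relations
`a_i v_i = 2k - 2i + 1` and `a_i a_{i+1} = i (2k - i)` are what makes it propagate. -/
lemma contX_ode {k : ℕ} (hk2 : 2 * k < p) (i : ℕ) (hi : i ≤ 2 * k) :
    (X ^ 2 - 1) * derivative (contX p k (i + 1)) =
      C (i : ZMod p) * X * contX p k (i + 1) - C (coefA p k (i + 1)) * contX p k i ∧
    (X ^ 2 - 1) * derivative (contX p k i) =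
      C (2 * k - i : ZMod p) * X * contX p k i - C (coefA p k i) * contX p k (i + 1) := by
  induction i with
  | zero => simp [contX, coefA]
  | succ i ih =>
    obtain ⟨h1, h2⟩ := ih (by omega)
    have hav := congrArg (C : ZMod p → (ZMod p)[X]) (coefA_spec hk2 i hi).1
    have hC2 : (C 2 : (ZMod p)[X]) = 2 := rfl
    have ha : coefA p k (i + 2) = coefA p k i + vseq (ZMod p) k (i + 1) := rfl
    have hX : contX p k (i + 2) =
      C (vseq (ZMod p) k (i + 1)) * X * contX p k (i + 1) + contX p k i := rfl
    show (X ^ 2 - 1) * derivative (contX p k (i + 2)) = _ * contX p k (i + 2)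
      - C (coefA p k (i + 2)) * _ ∧ _ = _ - _ * contX p k (i + 2)
    rw [hX, ha]
    simp only [derivative_add, derivative_mul, derivative_C, derivative_X, C_add, C_sub, C_mul,
      Nat.cast_add, Nat.cast_one, C_1, hC2] at h1 h2 hav ⊢
    constructor
    · linear_combination C (vseq (ZMod p) k (i + 1)) * X * h1 + h2 - X * contX p k i * hav
    · linear_combination h1 + X * contX p k (i + 1) * hav

/-- The inhomogeneous counterpart of `contX_ode` for the denominators. -/
lemma contY_ode {k : ℕ} (hk2 : 2 * k < p) (i : ℕ) (hi : i ≤ 2 * k) :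
    (X ^ 2 - 1) * derivative (contY p k (i + 1)) =
      C (i - 2 * k : ZMod p) * X * contY p k (i + 1) - C (coefA p k (i + 1)) * contY p k i
        + contX p k (i + 1) ∧
    (X ^ 2 - 1) * derivative (contY p k i) =
      -C (i : ZMod p) * X * contY p k i - C (coefA p k i) * contY p k (i + 1) + contX p k i := by
  induction i with
  | zero => simp [contX, contY, coefA]
  | succ i ih =>
    obtain ⟨h1, h2⟩ := ih (by omega)
    have hav := congrArg (C : ZMod p → (ZMod p)[X]) (coefA_spec hk2 i hi).1
    have hC2 : (C 2 : (ZMod p)[X]) = 2 := rfl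
    have ha : coefA p k (i + 2) = coefA p k i + vseq (ZMod p) k (i + 1) := rfl
    have hX : contX p k (i + 2) =
      C (vseq (ZMod p) k (i + 1)) * X * contX p k (i + 1) + contX p k i := rfl
    have hY : contY p k (i + 2) =
      C (vseq (ZMod p) k (i + 1)) * X * contY p k (i + 1) + contY p k i := rfl
    show (X ^ 2 - 1) * derivative (contY p k (i + 2)) = _ * contY p k (i + 2)
      - C (coefA p k (i + 2)) * _ + contX p k (i + 2) ∧ _ = _ - _ * contY p k (i + 2) + _
    rw [hX, hY, ha]
    simp only [derivative_add, derivative_mul, derivative_C, derivative_X, C_add, C_sub, C_mul,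
      Nat.cast_add, Nat.cast_one, C_1, hC2] at h1 h2 hav ⊢
    constructor
    · linear_combination C (vseq (ZMod p) k (i + 1)) * X * h1 + h2 - X * contY p k i * hav
    · linear_combination h1 + X * contY p k (i + 1) * hav

lemma contX_natDegree_le (k i : ℕ) : (contX p k i).natDegree ≤ i - 1 ∧
    (contX p k (i + 1)).natDegree ≤ i := by
  induction i with
  | zero => simp [contX]
  | succ i ih =>
    refine ⟨ih.2, ?_⟩
    rw [contX]
    refine (natDegree_add_le _ _).trans (max_le ?_ (by omega))
    refine natDegree_mul_le.trans ?_
    have := natDegree_C_mul_X_pow_le (vseq (ZMod p) k (i + 1)) 1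
    rw [pow_one] at this
    omega

lemma contY_natDegree_le (k i : ℕ) : (contY p k i).natDegree ≤ i - 1 ∧
    (contY p k (i + 1)).natDegree ≤ i := by
  induction i with
  | zero => simp [contY]
  | succ i ih =>
    refine ⟨ih.2, ?_⟩
    rw [contY]
    refine (natDegree_add_le _ _).trans (max_le ?_ (by omega))
    refine natDegree_mul_le.trans ?_
    have := natDegree_C_mul_X_pow_le (vseq (ZMod p) k (i + 1)) 1
    rw [pow_one] at this
    omega

lemma cont_eval_zero (k j : ℕ) : (contX p k (2 * j)).eval 0 = 0 ∧
    (contX p k (2 * j + 1)).eval 0 = 1 ∧ (contY p k (2 * j + 1)).eval 0 = 0 := by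
  induction j with
  | zero => simp [contX, contY]
  | succ j ih =>
    show (contX p k (2 * j + 2)).eval 0 = 0 ∧ (contX p k (2 * j + 1 + 2)).eval 0 = 1 ∧
      (contY p k (2 * j + 1 + 2)).eval 0 = 0
    rw [contX, contX, contY]
    simp [ih]

lemma cont_det (k i : ℕ) : contX p k i * contY p k (i + 1) - contX p k (i + 1) * contY p k i
    = (-1) ^ (i + 1) := by
  induction i with
  | zero => simp [contX, contY]
  | succ i ih =>
    show _ * contY p k (i + 2) - contX p k (i + 2) * _ = _
    rw [contX, contY, pow_succ, ← ih]
    ring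

/-- The last numerator is `± P_k`; the sign is read off at `T = 0`. -/
lemma contX_last {k : ℕ} (hk : 1 ≤ k) (hk2 : 2 * k < p) :
    contX p k (2 * k + 1) = C ((-1) ^ k) * Pk k := by
  rw [← sub_eq_zero]
  apply eq_zero_of_ode (k := k)
  · refine lt_of_le_of_lt (natDegree_sub_le _ _) (max_lt ?_ ?_)
    · exact (contX_natDegree_le k (2 * k)).2.trans_lt hk2
    · refine (natDegree_C_mul_le _ _).trans_lt ?_
      rwa [Pk_natDegree]
  · have h := (contX_ode hk2 (2 * k) le_rfl).1
    rw [coefA_last hk hk2] at h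
    rw [derivative_sub, derivative_C_mul, derivative_Pk, mul_sub, h, Pk_pred hk]
    push_cast
    simp only [C_0]
    ring
  · rw [eval_sub, (cont_eval_zero k k).2.1]
    simp [Pk, ← mul_pow]

lemma contX_penult {k : ℕ} (hk : 1 ≤ k) (hk2 : 2 * k < p) :
    contX p k (2 * k) = -C (coefA p k (2 * k) * (-1) ^ k) * Qk k := by
  have hQd := Qk_natDegree_le (p := p) hk
  apply eq_of_derivative_eq
  · exact (contX_natDegree_le k (2 * k)).1.trans_lt (by omega)
  · rw [← C_neg]; exact (natDegree_C_mul_le _ _).trans_lt (by omega)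
  · have h := (contX_ode hk2 (2 * k) le_rfl).2
    rw [contX_last hk hk2, Pk_pred hk] at h
    push_cast at h
    rw [sub_self, C_0] at h
    rw [← C_neg, derivative_C_mul, derivative_Qk hk hk2]
    apply mul_left_cancel₀ (monic_sq_sub_one (p := p)).ne_zero
    rw [h, C_neg, C_mul]; ring
  · rw [(cont_eval_zero k k).1]; simp [Qk_eval_zero]

lemma contY_last {k : ℕ} (hk : 1 ≤ k) (hk2 : 2 * k < p) :
    contY p k (2 * k + 1) = C ((-1) ^ k) * Qk k := by
  have hQd := Qk_natDegree_le (p := p) hk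
  apply eq_of_derivative_eq
  · exact (contY_natDegree_le k (2 * k)).2.trans_lt hk2
  · exact (natDegree_C_mul_le _ _).trans_lt (by omega)
  · have h := (contY_ode hk2 (2 * k) le_rfl).1
    rw [contX_last hk hk2, Pk_pred hk, coefA_last hk hk2] at h
    push_cast at h
    rw [sub_self, C_0] at h
    rw [derivative_C_mul, derivative_Qk hk hk2]
    apply mul_left_cancel₀ (monic_sq_sub_one (p := p)).ne_zero
    rw [h]; ring
  · rw [(cont_eval_zero k k).2.2]; simp [Qk_eval_zero]

/-- The value `a_{2k} = (2kθ_k)²`, obtained from the determinant of the last two convergents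
evaluated at `T = 1`. -/
lemma coefA_eq_theta {k : ℕ} (hk : 1 ≤ k) (hk2 : 2 * k < p) :
    coefA p k (2 * k) = (2 * k * theta (ZMod p) k) ^ 2 := by
  have h := congrArg (eval 1) (cont_det (p := p) k (2 * k))
  rw [contX_last hk hk2, contX_penult hk hk2, contY_last hk hk2] at h
  have hP1 : (Pk k : (ZMod p)[X]).eval 1 = 0 := by
    simp [Pk]; omega
  simp only [eval_sub, eval_mul, eval_neg, eval_C, eval_pow, eval_one, hP1, mul_zero, zero_mul,
    sub_zero] at h
  have hu : ((-1 : ZMod p) ^ k) ^ 2 = 1 := by rw [← pow_mul, mul_comm, pow_mul]; simp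
  rw [pow_succ, pow_mul] at h
  simp only [even_two, Even.neg_pow, one_pow] at h
  obtain ⟨q1, -⟩ := Qk_eval hk hk2
  set q := eval 1 (Qk k : (ZMod p)[X])
  have h' : coefA p k (2 * k) * q ^ 2 = 1 := by
    linear_combination -h - coefA p k (2 * k) * q ^ 2 * hu
  have hq : (2 * k * theta (ZMod p) k) ^ 2 * q ^ 2 = 1 := by
    linear_combination (2 * k * theta (ZMod p) k * q - 1) * q1
  linear_combination (2 * k * theta (ZMod p) k) ^ 2 * h' - coefA p k (2 * k) * hq

/-! ### Orders of Laurent series and uniqueness of continued fractions -/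

lemma Tval_eq : Tval (ZMod p) = HahnSeries.single (-1 : ℤ) (1 : ZMod p) := by
  unfold Tval
  apply inv_eq_of_mul_eq_one_left
  rw [HahnSeries.single_mul_single]
  simp

lemma pEval_add (f g : (ZMod p)[X]) : pEval (f + g) = pEval f + pEval g := eval₂_add _ _

lemma pEval_sub (f g : (ZMod p)[X]) : pEval (f - g) = pEval f - pEval g :=
  map_sub (pEvalHom (ZMod p)) f g

lemma pEval_mul (f g : (ZMod p)[X]) : pEval (f * g) = pEval f * pEval g :=
  map_mul (pEvalHom (ZMod p)) f g

lemma pEval_neg (f : (ZMod p)[X]) : pEval (-f) = -pEval f :=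
  map_neg (pEvalHom (ZMod p)) f

lemma pEval_pow (f : (ZMod p)[X]) (n : ℕ) : pEval (f ^ n) = pEval f ^ n :=
  map_pow (pEvalHom (ZMod p)) f n

lemma pEval_one : pEval (1 : (ZMod p)[X]) = 1 := map_one (pEvalHom (ZMod p))

lemma pEval_zero : pEval (0 : (ZMod p)[X]) = 0 := map_zero (pEvalHom (ZMod p))

lemma pEval_C (c : ZMod p) : pEval (C c) = HahnSeries.C c := eval₂_C _ _

lemma pEval_X : pEval (X : (ZMod p)[X]) = Tval (ZMod p) := eval₂_X _ _

lemma pEval_monomial (i : ℕ) (c : ZMod p) :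
    pEval (monomial i c) = HahnSeries.single (-(i : ℤ)) c := by
  rw [← C_mul_X_pow_eq_monomial, pEval_mul, pEval_pow, pEval_C, pEval_X, Tval_eq,
    HahnSeries.single_pow, HahnSeries.C_apply, HahnSeries.single_mul_single]
  simp

lemma pEval_coeff (f : (ZMod p)[X]) (n : ℕ) : (pEval f).coeff (-(n : ℤ)) = f.coeff n := by
  induction f using Polynomial.induction_on' with
  | add f g hf hg => rw [pEval_add, HahnSeries.coeff_add, hf, hg, coeff_add]
  | monomial i c =>
    rw [pEval_monomial, coeff_monomial, HahnSeries.coeff_single]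
    by_cases h : i = n
    · simp [h]
    · rw [if_neg h, if_neg]; omega

lemma pEval_orderTop_ge {f : (ZMod p)[X]} {d : ℕ} (hd : f.natDegree ≤ d) :
    ((-(d : ℤ) : ℤ) : WithTop ℤ) ≤ (pEval f).orderTop := by
  by_contra! h
  rw [HahnSeries.orderTop_lt_iff_exists] at h
  obtain ⟨m, hm, hm'⟩ := h
  rw [WithTop.coe_lt_coe] at hm
  obtain ⟨n, rfl⟩ : ∃ n : ℕ, m = -(n : ℤ) := ⟨m.natAbs, by omega⟩
  apply hm'
  rw [pEval_coeff]
  exact coeff_eq_zero_of_natDegree_lt (by omega)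

lemma pEval_eq_zero_of_small {f : (ZMod p)[X]} (h : 0 < (pEval f).orderTop) : f = 0 := by
  ext n
  rw [← pEval_coeff, coeff_zero]
  apply HahnSeries.coeff_eq_zero_of_lt_orderTop
  refine lt_of_le_of_lt ?_ h
  exact_mod_cast (by omega : -(n : ℤ) ≤ 0)

lemma pEval_ne_zero {f : (ZMod p)[X]} (h : f ≠ 0) : pEval f ≠ 0 := fun h0 =>
  h (pEval_eq_zero_of_small (by rw [h0]; simp))

/-- A Laurent series splits in only one way into a polynomial and a series in `T⁻¹` without
constant term. -/
lemma polyPart_unique {f g : (ZMod p)[X]} {y z : LaurentSeries (ZMod p)}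
    (hy : 0 < y.orderTop) (hz : 0 < z.orderTop) (h : pEval f + y = pEval g + z) :
    f = g ∧ y = z := by
  have h1 : pEval (f - g) = z - y := by rw [pEval_sub]; linear_combination h
  have h2 : f - g = 0 := by
    apply pEval_eq_zero_of_small
    rw [h1]
    exact lt_of_lt_of_le (lt_min hz hy) HahnSeries.min_orderTop_le_orderTop_sub
  have h3 : f = g := sub_eq_zero.mp h2
  exact ⟨h3, by rw [h3] at h; exact add_left_cancel h⟩

lemma orderTop_inv_add {x : LaurentSeries (ZMod p)} (hx : x ≠ 0) :
    x.orderTop + x⁻¹.orderTop = 0 := by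
  rw [← HahnSeries.orderTop_mul, mul_inv_cancel₀ hx, HahnSeries.orderTop_one]

lemma orderTop_inv {x : LaurentSeries (ZMod p)} {m : ℤ} (hx : x.orderTop = m) :
    x⁻¹.orderTop = ((-m : ℤ) : WithTop ℤ) := by
  have hx0 : x ≠ 0 := by
    rintro rfl; simp at hx
  have h := orderTop_inv_add hx0
  have hi := HahnSeries.order_eq_orderTop_of_ne_zero (inv_ne_zero hx0)
  rw [hx, ← hi, ← WithTop.coe_add, ← WithTop.coe_zero, WithTop.coe_inj] at h
  rw [← hi, WithTop.coe_inj]; omega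

lemma inv_small_of_adeg {x : LaurentSeries (ZMod p)} (hx : 0 < adeg x) :
    x ≠ 0 ∧ (1 : WithTop ℤ) ≤ x⁻¹.orderTop := by
  have hx0 : x ≠ 0 := by
    rintro rfl; simp [adeg] at hx
  refine ⟨hx0, ?_⟩
  rw [orderTop_inv (HahnSeries.order_eq_orderTop_of_ne_zero hx0).symm]
  unfold adeg at hx
  exact_mod_cast hx

lemma linear_add_small {c : ZMod p} (hc : c ≠ 0) {y : LaurentSeries (ZMod p)}
    (hy : 0 < y.orderTop) :
    (pEval (C c * X) + y) ≠ 0 ∧ 0 < (pEval (C c * X) + y)⁻¹.orderTop := by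
  have h1 : (pEval (C c * X)).orderTop = ((-1 : ℤ) : WithTop ℤ) := by
    rw [C_mul_X_eq_monomial, pEval_monomial, HahnSeries.orderTop_single hc]; rfl
  have h2 : (pEval (C c * X) + y).orderTop = ((-1 : ℤ) : WithTop ℤ) := by
    rw [HahnSeries.orderTop_add_eq_left, h1]
    rw [h1]
    exact lt_trans (by exact_mod_cast (by norm_num : (-1 : ℤ) < 0)) hy
  refine ⟨fun h => by
    rw [h, HahnSeries.orderTop_zero] at h2; exact WithTop.top_ne_coe h2, ?_⟩
  rw [orderTop_inv h2]
  exact_mod_cast (by norm_num : (0 : ℤ) < - -1)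

/-- The quantities `x_i (Q_k - w) - P_k y_i`, whose successive ratios are, up to sign, the
complete quotients of `P_k / (Q_k - w)`. -/
def remE (p k : ℕ) [Fact p.Prime] (w : LaurentSeries (ZMod p)) (i : ℕ) : LaurentSeries (ZMod p) :=
  pEval (contX p k i) * (pEval (Qk k) - w) - pEval (Pk k) * pEval (contY p k i)

lemma remE_succ (k : ℕ) (w : LaurentSeries (ZMod p)) (i : ℕ) :
    remE p k w (i + 2) = pEval (C (vseq (ZMod p) k (i + 1)) * X) * remE p k w (i + 1)
      + remE p k w i := by
  unfold remE
  rw [contX, contY, pEval_add, pEval_add, pEval_mul _ (contX _ _ _), pEval_mul _ (contY _ _ _)]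
  ring

lemma C_sign_sq (k : ℕ) :
    (HahnSeries.C ((-1 : ZMod p) ^ k) : LaurentSeries (ZMod p)) ^ 2 = 1 := by
  rw [← map_pow, ← pow_mul, mul_comm, pow_mul]; simp

lemma remE_last {k : ℕ} (hk : 1 ≤ k) (hk2 : 2 * k < p) (w : LaurentSeries (ZMod p)) :
    remE p k w (2 * k + 1) = -(HahnSeries.C ((-1) ^ k) * pEval (Pk k) * w) := by
  unfold remE
  rw [contX_last hk hk2, contY_last hk hk2, pEval_mul, pEval_mul, pEval_C]
  ring

lemma remE_penult {k : ℕ} (hk : 1 ≤ k) (hk2 : 2 * k < p) (w : LaurentSeries (ZMod p)) :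
    remE p k w (2 * k) = -HahnSeries.C ((-1) ^ k) - pEval (contX p k (2 * k)) * w := by
  have h := congrArg pEval (cont_det (p := p) k (2 * k))
  rw [pEval_sub, pEval_mul, pEval_mul, contX_last hk hk2, contY_last hk hk2, pEval_mul, pEval_mul,
    pEval_C, pow_succ, pow_mul] at h
  simp only [even_two, Even.neg_pow, one_pow, one_mul, pEval_neg, pEval_one] at h
  have hu := C_sign_sq (p := p) k
  unfold remE
  set u : LaurentSeries (ZMod p) := HahnSeries.C ((-1 : ZMod p) ^ k)
  linear_combination u * h - (pEval (contX p k (2 * k)) * pEval (Qk k)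
    - pEval (Pk k) * pEval (contY p k (2 * k))) * hu

/-- Successive ratios of `remE` have negative degree when `w` is small. The claim is obtained by
descending induction from `i = 2k`, where both terms are explicit. -/
lemma remE_small {k : ℕ} (hk : 1 ≤ k) (hk2 : 2 * k < p) {w : LaurentSeries (ZMod p)}
    (hw : ((p : ℤ) : WithTop ℤ) ≤ w.orderTop) (j : ℕ) (hj : j ≤ 2 * k) :
    remE p k w (2 * k - j) ≠ 0 ∧
      0 < (remE p k w (2 * k - j + 1) / remE p k w (2 * k - j)).orderTop := by
  have hCu : (HahnSeries.C ((-1 : ZMod p) ^ k) : LaurentSeries (ZMod p)).orderTop = 0 := by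
    rw [HahnSeries.C_apply, HahnSeries.orderTop_single (by simp)]; rfl
  have hmulw : ∀ f : (ZMod p)[X], f.natDegree ≤ 2 * k → 0 < (pEval f * w).orderTop := by
    intro f hf
    rw [HahnSeries.orderTop_mul]
    refine lt_of_lt_of_le ?_ (add_le_add (pEval_orderTop_ge hf) hw)
    rw [← WithTop.coe_add]
    exact_mod_cast (by push_cast; omega : (0 : ℤ) < -((2 * k : ℕ) : ℤ) + p)
  induction j with
  | zero =>
    have h0 : (remE p k w (2 * k)).orderTop = ((0 : ℤ) : WithTop ℤ) := by
      rw [remE_penult hk hk2, HahnSeries.orderTop_sub, HahnSeries.orderTop_neg, hCu]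
      · rfl
      rw [HahnSeries.orderTop_neg, hCu]
      exact hmulw _ ((contX_natDegree_le k (2 * k)).1.trans (by omega))
    refine ⟨fun h => ?_, ?_⟩
    · rw [Nat.sub_zero] at h; rw [h] at h0; simp at h0
    · rw [Nat.sub_zero, div_eq_mul_inv, HahnSeries.orderTop_mul, orderTop_inv h0,
        remE_last hk hk2, HahnSeries.orderTop_neg, mul_assoc, HahnSeries.orderTop_mul, hCu]
      simpa using hmulw (Pk k) (Pk_natDegree k).le
  | succ j ih =>
    obtain ⟨h1, h2⟩ := ih (by omega)
    obtain ⟨i, hi⟩ : ∃ i, 2 * k - (j + 1) = i := ⟨_, rfl⟩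
    have hi' : 2 * k - j = i + 1 := by omega
    rw [hi'] at h1 h2
    rw [hi]
    have hv : -vseq (ZMod p) k (i + 1) ≠ 0 := neg_ne_zero.mpr (vseq_ne_zero hk2 (by omega) (by omega))
    have e : remE p k w i / remE p k w (i + 1) = pEval (C (-vseq (ZMod p) k (i + 1)) * X)
        + remE p k w (i + 1 + 1) / remE p k w (i + 1) := by
      rw [remE_succ, C_neg, neg_mul, pEval_neg]
      field_simp
      ring
    obtain ⟨g1, g2⟩ := linear_add_small hv h2
    rw [← e] at g1 g2
    rw [inv_div] at g2
    exact ⟨fun h => g1 (by rw [h, zero_div]), g2⟩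

/-- A block of partial quotients: if `β_m = B + r₀ (Q_k - w) / P_k` with `w` small, then `a_m = B`,
the next `2k` partial quotients are `r_i v_i T`, and `β_{m+2k+1}` is given explicitly. -/
lemma cf_block {k : ℕ} (hk : 1 ≤ k) (hk2 : 2 * k < p) {α : LaurentSeries (ZMod p)}
    {a : ℕ → (ZMod p)[X]} {β : ℕ → LaurentSeries (ZMod p)} (hcf : IsCFOf α a β)
    {m : ℕ} (hm : 1 ≤ m) {B : (ZMod p)[X]} {w : LaurentSeries (ZMod p)} (hw0 : w ≠ 0)
    (hw : ((p : ℤ) : WithTop ℤ) ≤ w.orderTop) {r : ℕ → ZMod p} (hr0 : r 0 ≠ 0)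
    (hr : ∀ i, r (i + 1) = (r i)⁻¹)
    (hβ : β m = pEval B + HahnSeries.C (r 0) * ((pEval (Qk k) - w) / pEval (Pk k))) :
    a m = B ∧ (∀ i, 1 ≤ i → i ≤ 2 * k → a (m + i) = C (vseq (ZMod p) k i * r i) * X) ∧
    w⁻¹ = HahnSeries.C (coefA p k (2 * k)) * pEval (Qk k)
      - HahnSeries.C (r 0) * pEval (Pk k) * β (m + 2 * k + 1) := by
  have hsmall : ∀ i, i ≤ 2 * k → remE p k w i ≠ 0 ∧
      0 < (remE p k w (i + 1) / remE p k w i).orderTop := by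
    intro i hi
    have := remE_small hk hk2 hw (2 * k - i) (by omega)
    rwa [show 2 * k - (2 * k - i) = i by omega] at this
  have hrne : ∀ i, r i ≠ 0 := by
    intro i
    induction i with
    | zero => exact hr0
    | succ i ih => rw [hr]; exact inv_ne_zero ih
  -- the inverse of the complete quotient of index `m + i + 1`
  let S : ℕ → LaurentSeries (ZMod p) := fun i =>
    -(HahnSeries.C (r i) * (remE p k w (i + 1) / remE p k w i))
  have hSsmall : ∀ i, i ≤ 2 * k → 0 < (S i).orderTop := by
    intro i hi
    simp only [S]
    rw [HahnSeries.orderTop_neg, HahnSeries.orderTop_mul, HahnSeries.C_apply,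
      HahnSeries.orderTop_single (hrne i)]
    simpa using (hsmall i hi).2
  have hinv : ∀ n, 1 ≤ n → 0 < ((β (n + 1))⁻¹).orderTop := fun n _ =>
    lt_of_lt_of_le (by exact_mod_cast (by norm_num : (0 : ℤ) < 1))
      (inv_small_of_adeg (hcf.2 (n + 1) (by omega)).2.1).2
  have hstart : a m = B ∧ (β (m + 1))⁻¹ = S 0 := by
    apply polyPart_unique (hinv m hm) (hSsmall 0 (by omega))
    rw [← (hcf.2 m hm).2.2, hβ]
    simp only [S, remE, contX, contY, pEval_zero, pEval_one, zero_mul, one_mul, mul_one, mul_zero,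
      sub_zero, zero_sub, div_neg, mul_neg, neg_neg]
  have hstep : ∀ i, i < 2 * k → (β (m + i + 1))⁻¹ = S i →
      a (m + (i + 1)) = C (vseq (ZMod p) k (i + 1) * r (i + 1)) * X ∧
      (β (m + (i + 1) + 1))⁻¹ = S (i + 1) := by
    intro i hi hS
    apply polyPart_unique (hinv _ (by omega)) (hSsmall (i + 1) (by omega))
    rw [← (hcf.2 (m + (i + 1)) (by omega)).2.2]
    have h1 := (hsmall i (by omega)).1
    have h2 := (hsmall (i + 1) (by omega)).1
    have hC : (HahnSeries.C (r i) : LaurentSeries (ZMod p)) ≠ 0 := by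
      simpa using hrne i
    have e : β (m + (i + 1)) = (S i)⁻¹ := by rw [← hS, inv_inv]; rfl
    rw [e]
    simp only [S, hr i, map_inv₀, C_mul, pEval_mul, pEval_C]
    have e2 : remE p k w (i + 1 + 1) = _ := remE_succ k w i
    rw [e2, pEval_mul, pEval_C]
    field_simp
    ring
  have hall : ∀ i, i ≤ 2 * k → (β (m + i + 1))⁻¹ = S i := by
    intro i
    induction i with
    | zero => exact fun _ => hstart.2
    | succ i ih => exact fun hi => (hstep i (by omega) (ih (by omega))).2
  refine ⟨hstart.1, ?_, ?_⟩
  · intro i hi1 hi2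
    obtain ⟨j, rfl⟩ : ∃ j, i = j + 1 := ⟨i - 1, by omega⟩
    exact (hstep j (by omega) (hall j (by omega))).1
  · have hper : ∀ j, r (2 * j) = r 0 := by
      intro j
      induction j with
      | zero => rfl
      | succ j ih => rw [show 2 * (j + 1) = 2 * j + 1 + 1 by ring, hr, hr, inv_inv, ih]
    have h := hall (2 * k) le_rfl
    have h1 := (hsmall (2 * k) le_rfl).1
    have hβe : β (m + 2 * k + 1) = (S (2 * k))⁻¹ := by rw [← h, inv_inv]
    rw [hβe]
    simp only [S, hper]
    have hP : pEval (Pk k : (ZMod p)[X]) ≠ 0 := pEval_ne_zero (Pk_monic k).ne_zero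
    have hC : (HahnSeries.C (r 0) : LaurentSeries (ZMod p)) ≠ 0 := by
      simpa using hr0
    have hu := C_sign_sq (p := p) k
    rw [remE_last hk hk2, remE_penult hk hk2, contX_penult hk hk2, neg_mul, pEval_neg, pEval_mul,
      pEval_C, map_mul HahnSeries.C]
    set u : LaurentSeries (ZMod p) := HahnSeries.C ((-1 : ZMod p) ^ k)
    have hu0 : u ≠ 0 := by
      intro h; rw [h] at hu; simp at hu
    field_simp
    ring

/-! ### The recursion between blocks -/

instance laurent_charP : CharP (LaurentSeries (ZMod p)) p :=
  charP_of_injective_ringHom (HahnSeries.C_injective (Γ := ℤ) (R := ZMod p)) p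

/-- `β_{m+1}^p = ε P_k β_g + 2kθ_k δ_m⁻¹ Q_k` yields the polynomial part of `β_g`, when `a_{m+1}` is
a multiple of some `A_{i,k}`. -/
lemma beta_expand {k : ℕ} (hk : 1 ≤ k) (hk2 : 2 * k < p) {b b' bg : LaurentSeries (ZMod p)}
    {lam e d d' : ZMod p} {i : ℕ} (he : e ≠ 0) (hd : d ≠ 0) (hb' : b' ≠ 0)
    (hb : b = pEval (C lam * Aseq (ZMod p) p k i) + b'⁻¹)
    (hδ : d = theta (ZMod p) k ^ i * lam + d'⁻¹)
    (hH : b ^ p = HahnSeries.C e * pEval (Pk k) * bg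
      + HahnSeries.C (2 * k * theta (ZMod p) k / d') * pEval (Qk k)) :
    bg = pEval (C (e⁻¹ * lam) * Aseq (ZMod p) p k (i + 1)) +
      HahnSeries.C (-(e⁻¹ * (2 * k * theta (ZMod p) k * d))) * ((pEval (Qk k) -
        (HahnSeries.C (2 * k * theta (ZMod p) k * d) * b' ^ p)⁻¹) / pEval (Pk k)) := by
  have hP : pEval (Pk k : (ZMod p)[X]) ≠ 0 := pEval_ne_zero (Pk_monic k).ne_zero
  have h2' := two_ne hk hk2
  have hk0 : (k : ZMod p) ≠ 0 := natCast_ne_zero_of_lt (by omega) (by omega)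
  have hth := theta_ne_zero hk hk2
  have hE : (HahnSeries.C e : LaurentSeries (ZMod p)) ≠ 0 := by simpa using he
  set c := 2 * k * theta (ZMod p) k * d with hc
  have hc0 : c ≠ 0 := by simp [hc, h2', hk0, hth, hd]
  have hC0 : (HahnSeries.C c : LaurentSeries (ZMod p)) ≠ 0 := by simpa using hc0
  have hA := congrArg pEval (Aseq_pow hk hk2 i)
  rw [pEval_pow, pEval_sub, pEval_mul, pEval_mul, pEval_C] at hA
  have hl : (HahnSeries.C lam : LaurentSeries (ZMod p)) ^ p = HahnSeries.C lam := by
    rw [← map_pow, ZMod.pow_card]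
  have hcc : (HahnSeries.C c : LaurentSeries (ZMod p)) =
      HahnSeries.C lam * HahnSeries.C (2 * k * theta (ZMod p) k * theta (ZMod p) k ^ i)
        + HahnSeries.C (2 * k * theta (ZMod p) k / d') := by
    rw [← map_mul, ← map_add, hc, hδ]
    congr 1
    ring
  rw [hb, pEval_mul, pEval_C, add_pow_char, mul_pow, hA, hl, inv_pow] at hH
  have hbp : b' ^ p ≠ 0 := pow_ne_zero _ hb'
  apply mul_left_cancel₀ (mul_ne_zero hE hP)
  simp only [pEval_mul, pEval_C, map_mul, map_inv₀, map_neg]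
  have hx : HahnSeries.C e * pEval (Pk k) * bg = HahnSeries.C lam * pEval (Pk k) *
      pEval (Aseq (ZMod p) p k (i + 1)) - HahnSeries.C c * pEval (Qk k) + (b' ^ p)⁻¹ := by
    rw [hcc]; linear_combination -hH
  rw [hx]
  field_simp
  ring

/-- Inside a block, with `δ_{f(n)+i} = -ρ_i · i / a_i` and `λ_{f(n)+i} = v_i ρ_i`, the recursion
`δ_j = λ_j + 1/δ_{j-1}` holds. -/
lemma delta_block {k : ℕ} (hk2 : 2 * k < p) {i : ℕ} (hi : 1 ≤ i) (hik : i + 1 ≤ 2 * k)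
    {r : ZMod p} (hr : r ≠ 0) :
    -(r⁻¹ * (((i + 1 : ℕ) : ZMod p) / coefA p k (i + 1))) = vseq (ZMod p) k (i + 1) * r⁻¹
      + (-(r * ((i : ZMod p) / coefA p k i)))⁻¹ := by
  have h1 := coefA_mul_succ hk2 (i := i) (by omega)
  have h2 := coefA_mul_vseq hk2 (i := i + 1) (by omega) hik
  have ha := coefA_ne_zero hk2 (i := i) hi (by omega)
  have ha' := coefA_ne_zero hk2 (i := i + 1) (by omega) hik
  have hi0 : (i : ZMod p) ≠ 0 := natCast_ne_zero_of_lt (by omega) (by omega)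
  have h3 : coefA p k i = (i * (2 * k - i)) / coefA p k (i + 1) := by
    rw [eq_div_iff ha', ← h1]; ring
  have h4 : vseq (ZMod p) k (i + 1) = (2 * k - 2 * (i + 1) + 1) / coefA p k (i + 1) := by
    rw [eq_div_iff ha']; push_cast at h2; linear_combination h2
  have h5 : (-(r * ((i : ZMod p) / coefA p k i)))⁻¹ = -(r⁻¹ * ((2 * k - i) / coefA p k (i + 1))) := by
    rw [inv_neg, mul_inv, inv_div, h3]
    field_simp
  rw [h5, h4]
  push_cast
  field_simp
  ring

lemma fcf_cons {F : Type} [DivisionRing F] (c : F) {L : List F} (hL : L ≠ []) :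
    fcf (c :: L) = c + (fcf L)⁻¹ := by
  cases L with
  | nil => exact absurd rfl hL
  | cons d t => rfl

lemma sign_zpow_succ (e : ZMod p) (n : ℕ) :
    e ^ ((-1 : ℤ) ^ (n + 1)) = (e ^ ((-1 : ℤ) ^ n))⁻¹ := by
  rw [pow_succ, mul_neg_one, zpow_neg]

/-- **Theorem 1.** Sufficient condition for an expansion of type
`(p, l, k)` to be perfect.  With `f(n) = (2k+1)n + l − 2k`, the extended index sequence
`i(n)`, condition (III) (`δ_n = [θ^{i(n)}λ_n, …, θ^{i(1)}λ₁, 2kθ/ε₂]` well defined in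
`F_p*` for `1 ≤ n ≤ l`) and condition (IV) (`δ_l = 2kε₁/ε₂`), every partial quotient
satisfies `a_n = λ_n A_{i(n),k}`, with `(λ_n)` and `(δ_n)` given by the stated
recursions. -/
theorem stmt12 (p : ℕ) [Fact p.Prime] (hodd : Odd p) (l k : ℕ) (hl : 1 ≤ l) (hk : 1 ≤ k)
    (hk2 : 2 * k < p) (ε₁ ε₂ : ZMod p) (hε₁ : ε₁ ≠ 0) (hε₂ : ε₂ ≠ 0)
    (lam δ : ℕ → ZMod p) (idx : ℕ → ℕ)
    (hlam0 : ∀ j, 1 ≤ j → j ≤ l → lam j ≠ 0)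
    -- the extended index sequence
    (hidx1 : ∀ n, 1 ≤ n → idx ((2 * k + 1) * n + l - 2 * k) = idx n + 1)
    (hidx2 : ∀ n, l < n → (¬ ∃ m, 1 ≤ m ∧ n = (2 * k + 1) * m + l - 2 * k) → idx n = 0)
    -- `α` is of type `(p, l, k)`, conditions (I) and (II)
    (α : LaurentSeries (ZMod p)) (a : ℕ → Polynomial (ZMod p))
    (β : ℕ → LaurentSeries (ZMod p)) (hcf : IsCFOf α a β)
    (hI : ∀ j, 1 ≤ j → j ≤ l → a j = Polynomial.C (lam j) * Aseq (ZMod p) p k (idx j))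
    (hII : α ^ p = HahnSeries.C ε₁ * pEval (Pk k) * β (l + 1)
                 + HahnSeries.C ε₂ * pEval (Qk k))
    -- condition (III): `δ_n` is well defined in `F_p*` for `1 ≤ n ≤ l`
    (hIII : ∀ n, 1 ≤ n → n ≤ l →
      fcfWD (((List.range n).map fun j => theta (ZMod p) k ^ idx (n - j) * lam (n - j)) ++
        [2 * k * theta (ZMod p) k / ε₂]) ∧
      δ n = fcf (((List.range n).map fun j => theta (ZMod p) k ^ idx (n - j) * lam (n - j)) ++
        [2 * k * theta (ZMod p) k / ε₂]) ∧
      δ n ≠ 0)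
    -- condition (IV)
    (hIV : δ l = 2 * k * ε₁ / ε₂)
    -- the recursions defining `(λ_n)` and `(δ_n)` beyond the initial values
    (hlamrec : ∀ n, 1 ≤ n →
      lam ((2 * k + 1) * n + l - 2 * k) = ε₁ ^ ((-1 : ℤ) ^ n) * lam n ∧
      ∀ i, 1 ≤ i → i ≤ 2 * k →
        lam ((2 * k + 1) * n + l - 2 * k + i)
          = -vseq (ZMod p) k i * ε₁ ^ ((-1 : ℤ) ^ (n + i)) *
              (2 * k * theta (ZMod p) k * δ n) ^ ((-1 : ℤ) ^ i))
    (hδrec : ∀ n, 1 ≤ n →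
      δ ((2 * k + 1) * n + l - 2 * k) = ε₁ ^ ((-1 : ℤ) ^ n) * δ n * theta (ZMod p) k ∧
      ∀ i, 1 ≤ i → i ≤ 2 * k →
        δ ((2 * k + 1) * n + l - 2 * k + i)
          = ε₁ ^ ((-1 : ℤ) ^ (n + i)) *
              ((i : ZMod p) * vseq (ZMod p) k i / (2 * (k : ZMod p) - 2 * i + 1)) *
              (2 * k * theta (ZMod p) k * δ n) ^ ((-1 : ℤ) ^ i)) :
    -- conclusion (V)
    ∀ n, 1 ≤ n → lam n ≠ 0 ∧ δ n ≠ 0 ∧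
      a n = Polynomial.C (lam n) * Aseq (ZMod p) p k (idx n) := by
  have h2' := two_ne hk hk2
  have hk0 : (k : ZMod p) ≠ 0 := natCast_ne_zero_of_lt (by omega) (by omega)
  have hth := theta_ne_zero hk hk2
  set θ := theta (ZMod p) k with hθ
  -- `δ` extended by the last entry `δ₀ = 2kθ/ε₂` of the finite continued fractions
  obtain ⟨δ₀, hδ₀z, hδ₀s⟩ : ∃ d : ℕ → ZMod p, d 0 = 2 * k * θ / ε₂ ∧ ∀ n, d (n + 1) = δ (n + 1) :=
    ⟨fun n => if n = 0 then 2 * k * θ / ε₂ else δ n, by simp, by simp⟩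
  -- `g m = f(m + 1)`, free of truncated subtraction
  let g : ℕ → ℕ := fun m => (2 * k + 1) * m + l + 1
  have hg : ∀ m, (2 * k + 1) * (m + 1) + l - 2 * k = g m := by
    intro m; simp only [g]; rw [mul_add]; omega
  have hgs : ∀ m, g (m + 1) = g m + 2 * k + 1 := by
    intro m; simp only [g]; ring
  have hgm : ∀ m, m + 1 < g m := by
    intro m; simp only [g]; nlinarith
  have hIII' : ∀ n, n + 1 ≤ l → δ (n + 1) = θ ^ idx (n + 1) * lam (n + 1) + (δ₀ n)⁻¹ := by
    intro n hn
    rw [(hIII (n + 1) (by omega) hn).2.1, List.range_succ_eq_map, List.map_cons, List.cons_append,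
      fcf_cons _ (by simp)]
    congr 2
    rw [List.map_map]
    rcases n with _ | n
    · simp [fcf, hδ₀z]
    · rw [hδ₀s, (hIII (n + 1) (by omega) (by omega)).2.1]
      congr 3
      funext j
      simp [Nat.succ_eq_add_one]
  have key : ∀ m, (∀ j, 1 ≤ j → j < g m → lam j ≠ 0 ∧ δ j ≠ 0 ∧
        a j = C (lam j) * Aseq (ZMod p) p k (idx j) ∧
        δ j = θ ^ idx j * lam j + (δ₀ (j - 1))⁻¹) ∧
      β (m + 1) ^ p = HahnSeries.C (ε₁ ^ ((-1 : ℤ) ^ m)) * pEval (Pk k) * β (g m)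
        + HahnSeries.C (2 * k * θ / δ₀ m) * pEval (Qk k) ∧
      δ₀ (g m - 1) = δ₀ m * ε₁ ^ ((-1 : ℤ) ^ m) / θ := by
    intro m
    induction m with
    | zero =>
      have hg0 : g 0 = l + 1 := by simp [g]
      refine ⟨?_, ?_, ?_⟩
      · intro j hj1 hj2
        rw [hg0] at hj2
        obtain ⟨n, rfl⟩ : ∃ n, j = n + 1 := ⟨j - 1, by omega⟩
        exact ⟨hlam0 _ hj1 (by omega), (hIII _ hj1 (by omega)).2.2, hI _ hj1 (by omega),
          hIII' n (by omega)⟩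
      · rw [zero_add, hcf.1, hII, hg0, hδ₀z]
        congr 3
        · simp
        · field_simp
      · rw [hg0, Nat.add_sub_cancel, hδ₀z]
        obtain ⟨n, rfl⟩ : ∃ n, l = n + 1 := ⟨l - 1, by omega⟩
        rw [hδ₀s, hIV]
        simp
        field_simp
    | succ m ih =>
      obtain ⟨hA, hB, hC⟩ := ih
      obtain ⟨hlm, hdm, ham, hδm⟩ := hA (m + 1) (by omega) (hgm m)
      rw [Nat.add_sub_cancel] at hδm
      set e := ε₁ ^ ((-1 : ℤ) ^ m) with he
      have he0 : e ≠ 0 := zpow_ne_zero _ hε₁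
      have he1 : ε₁ ^ ((-1 : ℤ) ^ (m + 1)) = e⁻¹ := sign_zpow_succ _ _
      set c := 2 * k * θ * δ (m + 1) with hc
      have hc0 : c ≠ 0 := by simp [hc, h2', hk0, hth, hdm]
      -- the scaling factors of the block following index `f(m + 1)`
      let r : ℕ → ZMod p := fun i =>
        -(ε₁ ^ ((-1 : ℤ) ^ (m + 1 + i)) * c ^ ((-1 : ℤ) ^ i))
      have hr0 : r 0 = -(e⁻¹ * c) := by simp only [r]; rw [add_zero, he1]; simp
      have hr0' : r 0 ≠ 0 := by rw [hr0]; simp [he0, hc0]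
      have hr : ∀ i, r (i + 1) = (r i)⁻¹ := by
        intro i
        simp only [r]
        rw [← add_assoc, sign_zpow_succ, sign_zpow_succ, inv_neg, mul_inv]
      have hrne : ∀ i, r i ≠ 0 := by
        intro i
        simp only [r]
        exact neg_ne_zero.mpr (mul_ne_zero (zpow_ne_zero _ hε₁) (zpow_ne_zero _ hc0))
      have hb' := inv_small_of_adeg (hcf.2 (m + 2) (by omega)).2.1
      have hbeta := beta_expand hk hk2 he0 hdm hb'.1
        (by rw [← ham]; exact (hcf.2 (m + 1) (by omega)).2.2) hδm hB
      rw [← hθ, ← hc, ← hr0] at hbeta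
      have hw0 : (HahnSeries.C c * β (m + 2) ^ p)⁻¹ ≠ 0 :=
        inv_ne_zero (mul_ne_zero (by simpa using hc0) (pow_ne_zero _ hb'.1))
      have hw : ((p : ℤ) : WithTop ℤ) ≤ ((HahnSeries.C c * β (m + 2) ^ p)⁻¹).orderTop := by
        rw [mul_inv, ← map_inv₀, ← inv_pow, HahnSeries.orderTop_mul, HahnSeries.C_apply,
          HahnSeries.orderTop_single (inv_ne_zero hc0), WithTop.coe_zero, zero_add]
        refine le_trans ?_ HahnSeries.orderTop_nsmul_le_orderTop_pow
        refine le_trans ?_ (nsmul_le_nsmul_right hb'.2 p)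
        simp
      obtain ⟨ha0, hai, hlast⟩ := cf_block hk hk2 hcf (by have := hgm m; omega) hw0 hw hr0' hr hbeta
      have hlr := hlamrec (m + 1) (by omega)
      have hdr := hδrec (m + 1) (by omega)
      have hix := hidx1 (m + 1) (by omega)
      rw [hg] at hlr hdr hix
      obtain ⟨hl0, hli⟩ := hlr
      obtain ⟨hd0, hdi⟩ := hdr
      rw [he1] at hl0 hd0
      have hli' : ∀ i, 1 ≤ i → i ≤ 2 * k → lam (g m + i) = vseq (ZMod p) k i * r i := by
        intro i h1 h2
        rw [hli i h1 h2]; simp only [r]; ring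
      have hdi' : ∀ i, 1 ≤ i → i ≤ 2 * k → δ (g m + i) = -(r i * ((i : ZMod p) / coefA p k i)) := by
        intro i h1 h2
        rw [hdi i h1 h2, ← coefA_mul_vseq hk2 h1 h2, ← hc]
        have := vseq_ne_zero hk2 h1 h2
        have := coefA_ne_zero hk2 h1 h2
        simp only [r]
        field_simp
      have hix0 : ∀ i, 1 ≤ i → i ≤ 2 * k → idx (g m + i) = 0 := by
        intro i h1 h2
        apply hidx2
        · simp only [g]; omega
        rintro ⟨n, hn1, hn⟩
        obtain ⟨n, rfl⟩ : ∃ n', n = n' + 1 := ⟨n - 1, by omega⟩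
        rw [hg] at hn
        simp only [g] at hn
        have h3 : (2 * k + 1) * m + i = (2 * k + 1) * n := by omega
        have h4 := congrArg (· % (2 * k + 1)) h3
        simp only [Nat.mul_add_mod, Nat.mul_mod_right] at h4
        rw [Nat.mod_eq_of_lt (by omega)] at h4
        omega
      have hδpred : ∀ i, δ₀ (g m + i) = δ (g m + i) := by
        intro i
        obtain ⟨n, hn⟩ : ∃ n, g m + i = n + 1 := ⟨g m + i - 1, by have := hgm m; omega⟩
        rw [hn, hδ₀s]
      have hblast : δ₀ (g m + 2 * k) = δ (m + 1) * e⁻¹ / θ := by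
        have hper : ∀ j, r (2 * j) = r 0 := by
          intro j
          induction j with
          | zero => rfl
          | succ j ih => rw [show 2 * (j + 1) = 2 * j + 1 + 1 by ring, hr, hr, inv_inv, ih]
        rw [hδpred, hdi' (2 * k) (by omega) le_rfl, coefA_eq_theta hk hk2, hper, hr0, ← hθ, hc]
        push_cast
        field_simp
      refine ⟨?_, ?_, ?_⟩
      · intro j hj1 hj2
        rw [hgs] at hj2
        rcases lt_or_ge j (g m) with hlt | hge
        · exact hA j hj1 hlt
        obtain ⟨i, rfl⟩ : ∃ i, j = g m + i := ⟨j - g m, by omega⟩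
        rcases Nat.eq_zero_or_pos i with rfl | hi
        · rw [add_zero]
          refine ⟨?_, ?_, ?_, ?_⟩
          · rw [hl0]; exact mul_ne_zero (inv_ne_zero he0) hlm
          · rw [hd0]; exact mul_ne_zero (mul_ne_zero (inv_ne_zero he0) hdm) hth
          · rw [ha0, hl0, hix]
          · rw [hC, hd0, hix, hl0, hδm, inv_div, mul_comm (δ₀ m), ← div_div, div_eq_mul_inv _ (δ₀ m)]
            ring
        · have hi2 : i ≤ 2 * k := by omega
          refine ⟨?_, ?_, ?_, ?_⟩
          · rw [hli' i hi hi2]; exact mul_ne_zero (vseq_ne_zero hk2 hi hi2) (hrne i)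
          · rw [hdi' i hi hi2]
            exact neg_ne_zero.mpr (mul_ne_zero (hrne i) (div_ne_zero
              (natCast_ne_zero_of_lt (by omega) (by omega)) (coefA_ne_zero hk2 hi hi2)))
          · rw [hai i hi hi2, hli' i hi hi2, hix0 i hi hi2]; rfl
          · rw [hix0 i hi hi2, pow_zero, one_mul]
            obtain ⟨j, rfl⟩ : ∃ j, i = j + 1 := ⟨i - 1, by omega⟩
            rw [show g m + (j + 1) - 1 = g m + j by omega, hδpred, hdi' _ hi hi2, hli' _ hi hi2, hr]
            rcases Nat.eq_zero_or_pos j with rfl | hj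
            · rw [add_zero, hd0, hr0, hc]
              simp only [coefA, vseq, zero_add]
              push_cast
              field_simp
              ring
            · rw [hdi' j hj (by omega)]
              exact delta_block hk2 hj hi2 (hrne j)
      · rw [inv_inv] at hlast
        rw [he1, hgs, hδ₀s]
        have hCc : (HahnSeries.C c : LaurentSeries (ZMod p)) ≠ 0 := by simpa using hc0
        apply mul_left_cancel₀ hCc
        have e1 : (HahnSeries.C (coefA p k (2 * k)) : LaurentSeries (ZMod p)) =
            HahnSeries.C c * HahnSeries.C (2 * k * θ / δ (m + 1)) := by
          rw [← map_mul, coefA_eq_theta hk hk2, ← hθ, hc]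
          congr 1
          field_simp
        have e2 : (HahnSeries.C (r 0) : LaurentSeries (ZMod p)) =
            -(HahnSeries.C e⁻¹ * HahnSeries.C c) := by
          rw [hr0, map_neg, map_mul]
        rw [show m + 1 + 1 = m + 2 from rfl, hlast, e1, e2]
        ring
      · rw [hgs, Nat.add_sub_cancel, hδ₀s, he1, hblast]
  intro n hn
  obtain ⟨m, rfl⟩ : ∃ m, n = m + 1 := ⟨n - 1, by omega⟩
  obtain ⟨h1, h2, h3, -⟩ := (key m).1 (m + 1) hn (hgm m)
  exact ⟨h1, h2, h3⟩
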